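/- arXiv:2311.07728 — 6 statements merged into one kernel-verified Lean document; each statement's English description precedes it below -/
import Mathlib

section
/- Let g ≥ 2 and let Γ_g be the genus-g surface group. If V is an ℝ-linear subspace of Hom(Γ_g, ℝ) such that f ∘ φ ∈ V for every f ∈ V and every group automorphism φ of Γ_g, then either V = {0} or V = Hom(Γ_g, ℝ). (This is the key linear step in the proof of Theorem A: the subspace of homomorphisms is the unique nonzero finite-dimensional Aut(Γ)-invariant subspace among spaces of homomorphisms; it is proved via the surjection of the mapping class group onto Sp(2g,ℤ) and the irreducibility of the Sp(2g,ℤ)-action on ℝ^{2g}.) -/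
open scoped commutatorElement

/-- The single defining relator `[a₁,b₁][a₂,b₂]⋯[a_g,b_g]` of the genus-`g` surface group,
as an element of the free group on generators `a_i = (i, true)`, `b_i = (i, false)`. -/
def surfaceRelator (g : ℕ) : FreeGroup (Fin g × Bool) :=
  ((List.finRange g).map
    (fun i => ⁅FreeGroup.of (i, true), FreeGroup.of (i, false)⁆)).prod

/-- The genus-`g` surface group
`⟨a₁,b₁,…,a_g,b_g | [a₁,b₁][a₂,b₂]⋯[a_g,b_g]⟩`. -/
abbrev SurfaceGroup (g : ℕ) : Type :=
  PresentedGroup ({surfaceRelator g} : Set (FreeGroup (Fin g × Bool)))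

namespace SurfAux

/-- The standard generators. -/
def gen (g : ℕ) (x : Fin g × Bool) : SurfaceGroup g := PresentedGroup.of x

theorem lift_rel {G : Type*} [Group G] {g : ℕ} (h : Fin g × Bool → G) :
    FreeGroup.lift h (surfaceRelator g) =
      ((List.finRange g).map (fun i => ⁅h (i, true), h (i, false)⁆)).prod := by
  simp [surfaceRelator, map_list_prod, Function.comp_def, map_commutatorElement]

theorem gen_rel (g : ℕ) :
    ((List.finRange g).map (fun i => ⁅gen g (i, true), gen g (i, false)⁆)).prod = 1 := by
  rw [← lift_rel (gen g)]
  have : FreeGroup.lift (gen g) = PresentedGroup.mk ({surfaceRelator g} : Set _) := by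
    ext x; simp [gen, PresentedGroup.of]
  rw [this]
  exact PresentedGroup.one_of_mem (by simp)

theorem exists_hom {G : Type*} [Group G] {g : ℕ} (h : Fin g × Bool → G)
    (hh : ((List.finRange g).map (fun i => ⁅h (i, true), h (i, false)⁆)).prod = 1) :
    ∃ φ : SurfaceGroup g →* G, ∀ x, φ (gen g x) = h x := by
  refine ⟨PresentedGroup.toGroup (f := h) ?_, fun x => PresentedGroup.toGroup.of _⟩
  intro r hr
  rw [Set.mem_singleton_iff.1 hr, lift_rel, hh]

theorem hom_ext {G : Type*} [Group G] {g : ℕ} {φ ψ : SurfaceGroup g →* G}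
    (h : ∀ x, φ (gen g x) = ψ (gen g x)) : φ = ψ :=
  PresentedGroup.ext h

theorem exists_aut {g : ℕ} (h k : Fin g × Bool → SurfaceGroup g)
    (hh : ((List.finRange g).map (fun i => ⁅h (i, true), h (i, false)⁆)).prod = 1)
    (hk : ((List.finRange g).map (fun i => ⁅k (i, true), k (i, false)⁆)).prod = 1)
    (hkh : ∀ φ : SurfaceGroup g →* SurfaceGroup g, (∀ x, φ (gen g x) = h x) →
      ∀ x, φ (k x) = gen g x)
    (hhk : ∀ φ : SurfaceGroup g →* SurfaceGroup g, (∀ x, φ (gen g x) = k x) →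
      ∀ x, φ (h x) = gen g x) :
    ∃ φ : SurfaceGroup g ≃* SurfaceGroup g, ∀ x, φ (gen g x) = h x := by
  obtain ⟨φ, hφ⟩ := exists_hom h hh
  obtain ⟨ψ, hψ⟩ := exists_hom k hk
  refine ⟨MonoidHom.toMulEquiv φ ψ ?_ ?_, fun x => hφ x⟩
  · apply hom_ext; intro x; simp [hφ, hhk ψ hψ]
  · apply hom_ext; intro x; simp [hψ, hkh φ hφ]

/-- Transvection-type maps: multiply generator `(i,c)` on the right by `(i,!c)^e`. -/
def tv (g : ℕ) (i : Fin g) (c : Bool) (e : ℤ) (x : Fin g × Bool) : SurfaceGroup g :=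
  if x = (i, c) then gen g (i, c) * gen g (i, !c) ^ e else gen g x

theorem tv_rel (g : ℕ) (i : Fin g) (c : Bool) (e : ℤ) :
    ((List.finRange g).map (fun j => ⁅tv g i c e (j, true), tv g i c e (j, false)⁆)).prod = 1 := by
  rw [← gen_rel g]
  congr 2
  funext j
  by_cases hj : j = i
  · subst hj
    cases c
    · simp only [tv, commutatorElement_def]
      simp
      group
    · simp only [tv, commutatorElement_def]
      simp
      group
  · simp [tv, hj]

theorem tv_inv (g : ℕ) (i : Fin g) (c : Bool) (e : ℤ) (φ : SurfaceGroup g →* SurfaceGroup g)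
    (hφ : ∀ x, φ (gen g x) = tv g i c e x) (x) : φ (tv g i c (-e) x) = gen g x := by
  by_cases hx : x = (i, c)
  · subst hx
    simp [tv, hφ]
  · simp [tv, hx, hφ]

theorem tv_aut (g : ℕ) (i : Fin g) (c : Bool) :
    ∃ φ : SurfaceGroup g ≃* SurfaceGroup g, ∀ x, φ (gen g x) = tv g i c 1 x := by
  refine exists_aut _ (tv g i c (-1)) (tv_rel g i c 1) (tv_rel g i c (-1))
    (tv_inv g i c 1) ?_
  intro φ hφ x
  simpa using tv_inv g i c (-1) φ hφ x

theorem rot_aut (n : ℕ) :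
    ∃ φ : SurfaceGroup (n+1) ≃* SurfaceGroup (n+1), ∀ x,
      φ (gen (n+1) x) = gen (n+1) (x.1 + 1, x.2) := by
  have h0 := gen_rel (n+1)
  refine exists_aut _ (fun x => gen (n+1) (x.1 - 1, x.2)) ?_ ?_ ?_ ?_
  · rw [List.finRange_succ] at h0
    rw [List.finRange_succ_last]
    simp only [List.map_cons, List.map_append, List.map_map, List.prod_cons, List.prod_append,
      Function.comp_def, List.map_nil, List.prod_nil, mul_one, Fin.coeSucc_eq_succ,
      Fin.last_add_one] at h0 ⊢
    exact mul_eq_one_comm.1 h0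
  · have hs : ∀ i : Fin n, i.succ - 1 = i.castSucc := fun i => by
      rw [← Fin.coeSucc_eq_succ, add_sub_cancel_right]
    have hl : (0 : Fin (n+1)) - 1 = Fin.last n := by
      rw [← Fin.last_add_one, add_sub_cancel_right]
    rw [List.finRange_succ_last] at h0
    rw [List.finRange_succ]
    simp only [List.map_cons, List.map_append, List.map_map, List.prod_cons, List.prod_append,
      Function.comp_def, List.map_nil, List.prod_nil, mul_one, hs, hl] at h0 ⊢
    exact mul_eq_one_comm.1 h0
  · intro φ hφ x; simp [hφ]
  · intro φ hφ x; simp [hφ]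

/-- Additivity. -/
def IsAdditive {g : ℕ} (f : SurfaceGroup g → ℝ) : Prop := ∀ x y, f (x * y) = f x + f y

/-- the hom to `Multiplicative ℝ`. -/
def toHom {g : ℕ} (f : SurfaceGroup g → ℝ) (hf : IsAdditive f) : SurfaceGroup g →* Multiplicative ℝ :=
  MonoidHom.mk' (fun x => Multiplicative.ofAdd (f x)) (fun x y => by rw [hf x y]; rfl)

theorem add_ext {g : ℕ} {f f' : SurfaceGroup g → ℝ} (hf : IsAdditive f) (hf' : IsAdditive f')
    (h : ∀ x, f (gen g x) = f' (gen g x)) : f = f' := by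
  have : toHom f hf = toHom f' hf' := hom_ext (fun x => congrArg Multiplicative.ofAdd (h x))
  funext x
  exact congrArg Multiplicative.toAdd (DFunLike.congr_fun this x)

theorem exists_dual {g : ℕ} (x : Fin g × Bool) :
    ∃ d : SurfaceGroup g → ℝ, IsAdditive d ∧ ∀ y, d (gen g y) = if y = x then 1 else 0 := by
  obtain ⟨φ, hφ⟩ := exists_hom (g := g)
    (fun y => Multiplicative.ofAdd (if y = x then (1:ℝ) else 0))
    (List.prod_eq_one (by simp [commutatorElement_def]))
  refine ⟨fun z => (φ z).toAdd, fun a b => by simp, fun y => by simp [hφ]⟩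

theorem main (g : ℕ) (V : Submodule ℝ (SurfaceGroup g → ℝ))
    (hV : ∀ f ∈ V, IsAdditive f)
    (hinv : ∀ f ∈ V, ∀ φ : SurfaceGroup g ≃* SurfaceGroup g, (fun x => f (φ x)) ∈ V)
    (f : SurfaceGroup g → ℝ) (hf : f ∈ V) (hf0 : f ≠ 0) (f' : SurfaceGroup g → ℝ)
    (hf' : IsAdditive f') : f' ∈ V := by
  choose d hd hdg using exists_dual (g := g)
  have step : ∀ f ∈ V, ∀ i c, f (gen g (i, !c)) ≠ 0 → d (i, c) ∈ V := by
    intro f hf i c hne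
    obtain ⟨φ, hφ⟩ := tv_aut g i c
    have h1 : (f (gen g (i, !c)))⁻¹ • ((fun x => f (φ x)) - f) ∈ V :=
      V.smul_mem _ (V.sub_mem (hinv f hf φ) hf)
    convert h1
    refine add_ext (hd _) (hV _ h1) ?_
    intro x
    rw [hdg]
    by_cases hx : x = (i, c)
    · subst hx
      simp [hφ, tv, hV f hf _ _, hne]
    · simp [hφ, tv, hx]
  have flip : ∀ i c, d (i, !c) ∈ V → d (i, c) ∈ V := by
    intro i c h
    exact step _ h i c (by simp [hdg])
  have hrot : ∀ (i j : Fin g) c, d (i, c) ∈ V → d (j, c) ∈ V := by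
    cases g with
    | zero => intro i; exact i.elim0
    | succ n =>
      obtain ⟨φ, hφ⟩ := rot_aut n
      have h1 : ∀ (i : Fin (n+1)) c, d (i + 1, c) ∈ V → d (i, c) ∈ V := by
        intro i c h
        have h2 := hinv _ h φ
        have h3 : d (i, c) = fun x => d (i + 1, c) (φ x) := by
          refine add_ext (hd _) (hV _ h2) ?_
          rintro ⟨j, e⟩
          simp [hφ, hdg]
        rw [h3]
        exact h2
      have hdown : ∀ (i : Fin (n+1)) c, d (i, c) ∈ V → d (0, c) ∈ V := by
        intro i c
        induction i using Fin.induction with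
        | zero => exact id
        | succ i ih =>
          intro h
          exact ih (h1 _ _ (by rwa [Fin.coeSucc_eq_succ]))
      intro i j c h
      have hlast : d (Fin.last n, c) ∈ V :=
        h1 _ _ (by rw [Fin.last_add_one]; exact hdown i c h)
      induction j using Fin.reverseInduction with
      | last => exact hlast
      | cast j ih => exact h1 _ _ (by rwa [Fin.coeSucc_eq_succ])
  have hex : ∃ x, f (gen g x) ≠ 0 := by
    by_contra hcon
    push Not at hcon
    exact hf0 (add_ext (hV f hf) (hV 0 V.zero_mem) (by simpa using hcon))
  obtain ⟨⟨i, c⟩, hic⟩ := hex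
  have h1 : d (i, !c) ∈ V := step f hf i (!c) (by simpa using hic)
  have h2 : d (i, c) ∈ V := flip i c h1
  have hall : ∀ x, d x ∈ V := by
    rintro ⟨j, e⟩
    by_cases he : e = c
    · subst he; exact hrot i j _ h2
    · have : e = !c := by cases e <;> cases c <;> simp_all
      subst this; exact hrot i j _ h1
  have hsum : (∑ x, f' (gen g x) • d x) ∈ V :=
    V.sum_mem fun x _ => V.smul_mem _ (hall x)
  convert hsum
  refine add_ext hf' (hV _ hsum) ?_
  intro y
  simp [Finset.sum_apply, hdg]

end SurfAux

/-- If `V` is an `ℝ`-linear subspace of `Hom(Γ_g, ℝ)` (viewed as the subspace of real-valued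
functions on `Γ_g` that are additive homomorphisms), closed under precomposition with every
group automorphism of `Γ_g`, then `V = {0}` or `V = Hom(Γ_g, ℝ)`. -/
theorem aut_invariant_subspace_of_homs (g : ℕ) (hg : 2 ≤ g)
    (V : Submodule ℝ (SurfaceGroup g → ℝ))
    (hV : ∀ f ∈ V, ∀ x y : SurfaceGroup g, f (x * y) = f x + f y)
    (hinv : ∀ f ∈ V, ∀ φ : SurfaceGroup g ≃* SurfaceGroup g, (fun x => f (φ x)) ∈ V) :
    (V : Set (SurfaceGroup g → ℝ)) = {0} ∨
      (V : Set (SurfaceGroup g → ℝ)) =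
        {f | ∀ x y : SurfaceGroup g, f (x * y) = f x + f y} := by
  by_cases h : ∃ f ∈ V, f ≠ 0
  · right
    obtain ⟨f, hf, hf0⟩ := h
    ext f'
    exact ⟨fun h => hV f' h, fun h => SurfAux.main g V hV hinv f hf hf0 f' h⟩
  · left
    push Not at h
    ext f
    exact ⟨fun hf => h f hf, fun hf => by rw [Set.mem_singleton_iff.1 hf]; exact V.zero_mem⟩
end

section
/- If f is a real-valued function defined on the set of pairwise distinct triples {(x,y,z) ∈ (S¹)³ : x, y, z pairwise distinct} that is locally constant and alternating (i.e., f(y,x,z) = −f(x,y,z) and f(x,z,y) = −f(x,y,z) for all pairwise distinct triples), then there exists a constant c ∈ ℝ such that f(x,y,z) = c·Or(x,y,z) for all pairwise distinct triples (x,y,z). (This is the concluding step in the proof of Theorem D: a continuous alternating function that is locally constant off the multidiagonal is a multiple of the orientation cocycle, hence of the Euler class.) -/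
/-- A triple `(x, y, z)` of points of the circle `ℝ/ℤ` is positively oriented if it admits
lifts `a < b < c < a + 1` in `ℝ`. -/
def PosOriented (x y z : UnitAddCircle) : Prop :=
  ∃ a b c : ℝ, (a : UnitAddCircle) = x ∧ (b : UnitAddCircle) = y ∧
    (c : UnitAddCircle) = z ∧ a < b ∧ b < c ∧ c < a + 1

open Classical in
/-- The orientation cocycle: `+1` on positively oriented triples, `-1` otherwise
(on pairwise distinct triples, "otherwise" means negatively oriented). -/
noncomputable def orientationCocycle (x y z : UnitAddCircle) : ℝ :=
  if PosOriented x y z then 1 else -1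

/-- The set of pairwise distinct triples of points of the circle. -/
def distinctTriples : Set (UnitAddCircle × UnitAddCircle × UnitAddCircle) :=
  {p | p.1 ≠ p.2.1 ∧ p.1 ≠ p.2.2 ∧ p.2.1 ≠ p.2.2}

theorem coe_ne_aux {a b : ℝ} (h : a < b) (h' : b < a + 1) :
    (a : UnitAddCircle) ≠ (b : UnitAddCircle) := by
  intro e
  have := (AddCircle.coe_eq_coe_iff_of_mem_Ico (p := (1 : ℝ)) (a := a)
    (x := a) (y := b) ⟨le_refl _, by linarith⟩ ⟨h.le, h'⟩).1 e
  linarith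

theorem lift_aux (a : ℝ) (y : UnitAddCircle) (h : (a : UnitAddCircle) ≠ y) :
    ∃ b : ℝ, (b : UnitAddCircle) = y ∧ a < b ∧ b < a + 1 := by
  have hy : y ∈ ((↑) : ℝ → AddCircle (1 : ℝ)) '' Set.Ico a (a + 1) := by
    rw [AddCircle.coe_image_Ico_eq]; trivial
  obtain ⟨b, ⟨h1, h2⟩, rfl⟩ := hy
  refine ⟨b, rfl, lt_of_le_of_ne h1 ?_, h2⟩
  rintro rfl
  exact h rfl

/-- A locally constant alternating real function on the set of pairwise distinct triples of
points of the circle is a constant multiple of the orientation cocycle. -/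
theorem locallyConstant_alternating_eq_const_mul_orientation
    (f : UnitAddCircle → UnitAddCircle → UnitAddCircle → ℝ)
    (hlc : IsLocallyConstant (fun p : ↥distinctTriples => f p.1.1 p.1.2.1 p.1.2.2))
    (halt₁ : ∀ x y z : UnitAddCircle, x ≠ y → x ≠ z → y ≠ z → f y x z = - f x y z)
    (halt₂ : ∀ x y z : UnitAddCircle, x ≠ y → x ≠ z → y ≠ z → f x z y = - f x y z) :
    ∃ c : ℝ, ∀ x y z : UnitAddCircle, x ≠ y → x ≠ z → y ≠ z →
      f x y z = c * orientationCocycle x y z := by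
  let U : Set (ℝ × ℝ × ℝ) := {p | p.1 < p.2.1 ∧ p.2.1 < p.2.2 ∧ p.2.2 < p.1 + 1}
  have hU : Convex ℝ U := by
    rintro ⟨a, b, c⟩ ⟨h1, h2, h3⟩ ⟨a', b', c'⟩ ⟨h1', h2', h3'⟩ s t hs ht hst
    simp only at h1 h2 h3 h1' h2' h3'
    have key : ∀ u v : ℝ, 0 < u → 0 < v → 0 < s * u + t * v := by
      intro u v hu hv
      rcases hs.eq_or_lt with rfl | hs
      · have : t = 1 := by linarith
        subst this; linarith
      · have := mul_pos hs hu
        have := mul_nonneg ht hv.le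
        linarith
    have k1 := key (b - a) (b' - a') (by linarith) (by linarith)
    have k2 := key (c - b) (c' - b') (by linarith) (by linarith)
    have k3 := key (a + 1 - c) (a' + 1 - c') (by linarith) (by linarith)
    refine ⟨?_, ?_, ?_⟩ <;> simp only [Prod.fst_add, Prod.snd_add, Prod.smul_fst, Prod.smul_snd,
      smul_eq_mul] <;> linarith
  have hpre : PreconnectedSpace U := Subtype.preconnectedSpace hU.isPreconnected
  let π : U → distinctTriples := fun p =>
    ⟨((p.1.1 : UnitAddCircle), (p.1.2.1 : UnitAddCircle), (p.1.2.2 : UnitAddCircle)),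
      coe_ne_aux p.2.1 (by have := p.2.2.1; have := p.2.2.2; linarith),
      coe_ne_aux (by have := p.2.1; have := p.2.2.1; linarith) p.2.2.2,
      coe_ne_aux p.2.2.1 (by have := p.2.1; have := p.2.2.2; linarith)⟩
  have hq : Continuous (fun t : ℝ => (t : UnitAddCircle)) := AddCircle.continuous_mk' 1
  have hπ : Continuous π := by
    refine Continuous.subtype_mk ?_ _
    exact (hq.comp (by fun_prop)).prodMk ((hq.comp (by fun_prop)).prodMk (hq.comp (by fun_prop)))
  have hloc := hlc.comp_continuous hπ
  have hpos : ∀ x y z, PosOriented x y z →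
      f x y z = f ((0 : ℝ) : UnitAddCircle) ((1 / 3 : ℝ) : UnitAddCircle)
        ((2 / 3 : ℝ) : UnitAddCircle) := by
    rintro x y z ⟨a, b, c, rfl, rfl, rfl, h1, h2, h3⟩
    exact hloc.apply_eq_of_preconnectedSpace (⟨(a, b, c), h1, h2, h3⟩ : U)
      ⟨(0, 1 / 3, 2 / 3), by norm_num, by norm_num, by norm_num⟩
  refine ⟨f ((0 : ℝ) : UnitAddCircle) ((1 / 3 : ℝ) : UnitAddCircle)
    ((2 / 3 : ℝ) : UnitAddCircle), fun x y z hxy hxz hyz => ?_⟩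
  unfold orientationCocycle
  split_ifs with hp
  · rw [mul_one]; exact hpos x y z hp
  · have hp' : PosOriented x z y := by
      obtain ⟨a, rfl⟩ := QuotientAddGroup.mk_surjective x
      obtain ⟨b, rfl, hb, hb'⟩ := lift_aux a y hxy
      obtain ⟨c, rfl, hc, hc'⟩ := lift_aux a z hxz
      rcases lt_trichotomy b c with h | h | h
      · exact absurd ⟨a, b, c, rfl, rfl, rfl, hb, h, hc'⟩ hp
      · exact absurd (by rw [h]) hyz
      · exact ⟨a, c, b, rfl, rfl, rfl, hc, h, hb'⟩
    have e1 := hpos x z y hp'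
    have e2 := halt₂ x y z hxy hxz hyz
    linarith
end

section
/- Let X be a topological space and h : X → X a homeomorphism. Let V be a finite-dimensional linear subspace of the space of bounded continuous real-valued functions on X such that f ∘ h ∈ V for every f ∈ V. If a ∈ X is a fixed point of h (h(a) = a) and x ∈ X is a point whose iterates hⁿ(x) converge to a as n → +∞, then f(x) = f(a) for every f ∈ V. (This is the dynamical core of Lemma 3.3: since precomposition with h is a sup-norm-preserving bijection of V, the coordinates of f ∘ h^{−n} in a fixed basis of V remain bounded, and continuity of the basis elements at a forces f(x) = f(a).) -/
open Filter Topology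

/-- Let `h` be a homeomorphism of a topological space `X` and `V` a finite-dimensional
subspace of the space of bounded continuous real functions on `X` closed under
precomposition with `h`. If `a` is a fixed point of `h` and the iterates `hⁿ(x)` converge
to `a`, then `f x = f a` for every `f ∈ V`. -/
theorem eq_at_attracting_fixed_point {X : Type*} [TopologicalSpace X] (h : X ≃ₜ X)
    (V : Submodule ℝ (BoundedContinuousFunction X ℝ))
    (hfd : FiniteDimensional ℝ V)
    (hinv : ∀ f ∈ V, f.compContinuous (h : C(X, X)) ∈ V)
    (a : X) (ha : h a = a) (x : X)
    (hx : Tendsto (fun n : ℕ => (⇑h)^[n] x) atTop (𝓝 a)) :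
    ∀ f ∈ V, f x = f a := by
  let T : V →ₗ[ℝ] V :=
    { toFun := fun f => ⟨f.1.compContinuous (h : C(X, X)), hinv f.1 f.2⟩
      map_add' := fun f g => by ext y; rfl
      map_smul' := fun c f => by ext y; rfl }
  have hT : ∀ (f : V) (y : X), (T f).1 y = f.1 (h y) := fun f y => rfl
  have hinj : Function.Injective T := by
    intro f g hfg
    ext y
    have h1 := hT f (h.symm y)
    rw [hfg, hT, h.apply_symm_apply] at h1
    exact h1.symm
  have hsurj : Function.Surjective T := by
    have := hfd
    exact (LinearMap.injective_iff_surjective (K := ℝ) (V := V) (f := T)).mp hinj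
  intro f hf
  have key : ∀ n : ℕ, ∃ g : V, ∀ y, g.1 ((⇑h)^[n] y) = f y := by
    intro n
    induction n with
    | zero => exact ⟨⟨f, hf⟩, fun y => rfl⟩
    | succ n ih =>
      obtain ⟨g, hg⟩ := ih
      obtain ⟨k, hk⟩ := hsurj g
      refine ⟨k, fun y => ?_⟩
      rw [Function.iterate_succ_apply', ← hT, hk, hg]
  choose g hg using key
  have hnorm : ∀ n, g n ∈ Metric.closedBall (0 : V) ‖f‖ := by
    intro n
    rw [Metric.mem_closedBall, Subtype.dist_eq]
    change dist (g n).1 0 ≤ ‖f‖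
    rw [dist_zero_right]
    refine (BoundedContinuousFunction.norm_le (norm_nonneg f)).2 fun y => ?_
    obtain ⟨z, rfl⟩ := (h.surjective.iterate n) y
    rw [hg]
    exact f.norm_coe_le_norm z
  have : ProperSpace V := FiniteDimensional.proper ℝ V
  obtain ⟨G, -, φ, hφ, hlim⟩ := (isCompact_closedBall (0 : V) ‖f‖).tendsto_subseq hnorm
  have hlim' : Tendsto (fun n => (g (φ n)).1) atTop (𝓝 G.1) :=
    (continuous_subtype_val.tendsto G).comp hlim
  have main : ∀ z : X, Tendsto (fun n : ℕ => (⇑h)^[n] z) atTop (𝓝 a) → f z = G.1 a := by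
    intro z hz
    have h1 : Tendsto (fun n => (g (φ n)).1 ((⇑h)^[φ n] z)) atTop (𝓝 (G.1 a)) :=
      (continuous_eval.tendsto (G.1, a)).comp
        (hlim'.prodMk_nhds (hz.comp hφ.tendsto_atTop))
    simp only [hg] at h1
    exact tendsto_nhds_unique tendsto_const_nhds h1
  rw [main x hx, main a]
  simp only [Function.iterate_fixed ha]
  exact tendsto_const_nhds
end

section
/- Let h : S¹ → S¹ be a homeomorphism of the circle S¹ = ℝ/ℤ, and let I₁, I₂, I₃ be pairwise disjoint closed subsets of S¹, each having nonempty interior and each equal to the closure of its interior. Suppose that for each j ∈ {1,2,3} there is a point a_j ∈ I_j such that hⁿ(ξ) → a_j as n → +∞ for every ξ in the interior of I_j. Let X = {(x,y,z) ∈ (S¹)³ : x, y, z pairwise distinct}, and let V be a finite-dimensional linear subspace of the space of bounded continuous real-valued functions on X such that f ∘ (h×h×h) ∈ V for every f ∈ V. Then every f ∈ V is constant on I₁ × I₂ × I₃ (which is contained in X since the I_j are pairwise disjoint). (This is Lemma 3.3, 'constant on affected regions', stated in terms of circle dynamics: for an earthquake along a simple closed geodesic the boundaries at infinity of three distinct affected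 regions play the role of I₁, I₂, I₃, with a_j the attracting fixed point.) -/
open Filter Topology

/-- A homeomorphism `h` of the circle induces a continuous self-map `h × h × h`
of the space of pairwise distinct triples. -/
noncomputable def tripleMap (h : UnitAddCircle ≃ₜ UnitAddCircle) :
    C(↥distinctTriples, ↥distinctTriples) where
  toFun p := ⟨(h p.1.1, h p.1.2.1, h p.1.2.2),
    ⟨fun e => p.2.1 (h.injective e), fun e => p.2.2.1 (h.injective e),
      fun e => p.2.2.2 (h.injective e)⟩⟩
  continuous_toFun := by
    apply Continuous.subtype_mk
    fun_prop

lemma tripleMap_iter_coe (h : UnitAddCircle ≃ₜ UnitAddCircle) (n : ℕ) (p : ↥distinctTriples) :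
    ((⇑(tripleMap h))^[n] p).1 = ((⇑h)^[n] p.1.1, (⇑h)^[n] p.1.2.1, (⇑h)^[n] p.1.2.2) := by
  induction n with
  | zero => rfl
  | succ n ih =>
    rw [Function.iterate_succ_apply', Function.iterate_succ_apply', Function.iterate_succ_apply',
      Function.iterate_succ_apply']
    change (h _, h _, h _) = _
    rw [ih]

lemma tripleMap_surj (h : UnitAddCircle ≃ₜ UnitAddCircle) :
    Function.Surjective (tripleMap h) := by
  intro p
  refine ⟨tripleMap h.symm p, ?_⟩
  apply Subtype.ext
  change (h (h.symm _), h (h.symm _), h (h.symm _)) = _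
  simp

lemma recurrence_aux (h : UnitAddCircle ≃ₜ UnitAddCircle)
    (V : Submodule ℝ (BoundedContinuousFunction (↥distinctTriples) ℝ))
    (hfd : FiniteDimensional ℝ V)
    (hinv : ∀ f ∈ V, f.compContinuous (tripleMap h) ∈ V)
    (f : BoundedContinuousFunction (↥distinctTriples) ℝ) (hf : f ∈ V)
    (ε : ℝ) (hε : 0 < ε) (N : ℕ) :
    ∃ m ≥ N, ∀ p, dist (f ((⇑(tripleMap h))^[m] p)) (f p) < ε := by
  have key : ∀ n : ℕ, ∃ g : V, ∀ p, g.1 p = f ((⇑(tripleMap h))^[n] p) := by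
    intro n
    induction n with
    | zero => exact ⟨⟨f, hf⟩, fun p => rfl⟩
    | succ n ih =>
      obtain ⟨g, hg⟩ := ih
      refine ⟨⟨_, hinv g.1 g.2⟩, fun p => ?_⟩
      rw [Function.iterate_succ_apply]
      exact hg _
  choose u hu using key
  have : ProperSpace V := FiniteDimensional.proper ℝ V
  have hb : ∀ n, u n ∈ Metric.closedBall (0 : V) ‖f‖ := by
    intro n
    rw [Metric.mem_closedBall]
    change dist (u n).1 (0 : BoundedContinuousFunction (↥distinctTriples) ℝ) ≤ _
    rw [BoundedContinuousFunction.dist_le (norm_nonneg _)]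
    intro p
    rw [hu]
    have := f.norm_coe_le_norm ((⇑(tripleMap h))^[n] p)
    simpa using this
  obtain ⟨g, -, φ, hφ, hlim⟩ := tendsto_subseq_of_bounded Metric.isBounded_closedBall hb
  obtain ⟨K, hK⟩ := Metric.cauchySeq_iff'.1 hlim.cauchySeq ε hε
  have hKN := hK (K + N) (by omega)
  have hge : φ K + N ≤ φ (K + N) := by
    have := hφ.add_le_nat N K
    rw [add_comm K N]; omega
  refine ⟨φ (K + N) - φ K, by omega, fun p => ?_⟩
  obtain ⟨q, rfl⟩ := (tripleMap_surj h).iterate (φ K) p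
  rw [← Function.iterate_add_apply, Nat.sub_add_cancel (by omega), ← hu, ← hu]
  exact lt_of_le_of_lt (BoundedContinuousFunction.dist_coe_le_dist _) hKN

/-- Lemma 3.3 ("constant on affected regions"), in terms of circle dynamics: if `I₁, I₂, I₃`
are pairwise disjoint closed subsets of the circle, each the closure of its nonempty
interior, and the iterates of a circle homeomorphism `h` converge on the interior of each
`I_j` to a point `a_j ∈ I_j`, then every element of a finite-dimensional subspace of the
bounded continuous functions on the space of distinct triples that is invariant under
precomposition with `h × h × h` is constant on `I₁ × I₂ × I₃`. -/
theorem constant_on_affected_regions (h : UnitAddCircle ≃ₜ UnitAddCircle)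
    (I : Fin 3 → Set UnitAddCircle)
    (hclosed : ∀ j, IsClosed (I j))
    (hdisj : ∀ j k, j ≠ k → Disjoint (I j) (I k))
    (hint : ∀ j, (interior (I j)).Nonempty)
    (hreg : ∀ j, I j = closure (interior (I j)))
    (a : Fin 3 → UnitAddCircle) (ha : ∀ j, a j ∈ I j)
    (hconv : ∀ j, ∀ ξ ∈ interior (I j),
      Tendsto (fun n : ℕ => (⇑h)^[n] ξ) atTop (𝓝 (a j)))
    (V : Submodule ℝ (BoundedContinuousFunction (↥distinctTriples) ℝ))
    (hfd : FiniteDimensional ℝ V)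
    (hinv : ∀ f ∈ V, f.compContinuous (tripleMap h) ∈ V) :
    ∀ f ∈ V, ∀ p q : ↥distinctTriples,
      p.1.1 ∈ I 0 → p.1.2.1 ∈ I 1 → p.1.2.2 ∈ I 2 →
      q.1.1 ∈ I 0 → q.1.2.1 ∈ I 1 → q.1.2.2 ∈ I 2 →
      f p = f q := by
  have hsub : ∀ x y z, x ∈ I 0 → y ∈ I 1 → z ∈ I 2 → (x, y, z) ∈ distinctTriples := by
    intro x y z hx hy hz
    refine ⟨fun e => ?_, fun e => ?_, fun e => ?_⟩
    · exact Set.disjoint_left.1 (hdisj 0 1 (by decide)) hx (show x ∈ I 1 from (show x = y from e) ▸ hy)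
    · exact Set.disjoint_left.1 (hdisj 0 2 (by decide)) hx (show x ∈ I 2 from (show x = z from e) ▸ hz)
    · exact Set.disjoint_left.1 (hdisj 1 2 (by decide)) hy (show y ∈ I 2 from (show y = z from e) ▸ hz)
  intro f hf
  let A : ↥distinctTriples := ⟨(a 0, a 1, a 2), hsub _ _ _ (ha 0) (ha 1) (ha 2)⟩
  let U : Set ↥distinctTriples :=
    {p | p.1.1 ∈ interior (I 0) ∧ p.1.2.1 ∈ interior (I 1) ∧ p.1.2.2 ∈ interior (I 2)}
  have hU : ∀ p ∈ U, f p = f A := by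
    rintro p ⟨h0, h1, h2⟩
    have ht : Tendsto (fun n : ℕ => (⇑(tripleMap h))^[n] p) atTop (𝓝 A) := by
      rw [tendsto_subtype_rng]
      simp only [tripleMap_iter_coe]
      exact (hconv 0 _ h0).prodMk_nhds ((hconv 1 _ h1).prodMk_nhds (hconv 2 _ h2))
    have ht' := (f.continuous.tendsto A).comp ht
    apply eq_of_forall_dist_le
    intro ε hε
    obtain ⟨N, hN⟩ := Metric.tendsto_atTop.1 ht' (ε / 2) (by linarith)
    obtain ⟨m, hm, hd⟩ := recurrence_aux h V hfd hinv f hf (ε / 2) (by linarith) N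
    have e1 := hN m hm
    have e2 := hd p
    have e3 := dist_triangle_left (f p) (f A) (f ((⇑(tripleMap h))^[m] p))
    simp only [Function.comp_apply] at e1
    linarith
  have hcl : ∀ p : ↥distinctTriples, p.1.1 ∈ I 0 → p.1.2.1 ∈ I 1 → p.1.2.2 ∈ I 2 →
      f p = f A := by
    intro p h0 h1 h2
    have hp : p ∈ closure U := by
      rw [closure_subtype]
      have : Subtype.val '' U =
          interior (I 0) ×ˢ (interior (I 1) ×ˢ interior (I 2)) := by
        ext ⟨x, y, z⟩
        constructor
        · rintro ⟨q, hq, e⟩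
          rw [← e]
          exact hq
        · rintro ⟨hx, hy, hz⟩
          exact ⟨⟨(x, y, z), hsub _ _ _ (interior_subset hx) (interior_subset hy)
            (interior_subset hz)⟩, ⟨hx, hy, hz⟩, rfl⟩
      rw [this, closure_prod_eq, closure_prod_eq, ← hreg, ← hreg, ← hreg]
      exact ⟨h0, h1, h2⟩
    have hc : IsClosed {p | f p = f A} := isClosed_eq f.continuous continuous_const
    exact closure_minimal (fun p hp => hU p hp) hc hp
  intro p q p0 p1 p2 q0 q1 q2
  rw [hcl p p0 p1 p2, hcl q q0 q1 q2]
end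

section
/- Let Γ be a group, X a compact metrizable topological space with a Borel probability measure μ, and let ρ₁, ρ₂ be two actions of Γ on X by homeomorphisms. Let h : X → X be a homeomorphism satisfying h(ρ₁(γ)(x)) = ρ₂(γ)(h(x)) for all γ ∈ Γ and x ∈ X. Let f : X³ → ℝ be bounded and measurable, invariant under the diagonal ρ₁-action (f(ρ₁(γ)x₀, ρ₁(γ)x₁, ρ₁(γ)x₂) = f(x₀,x₁,x₂) for all γ and all xᵢ), and a cocycle. Define g : X³ → ℝ by g(y₀,y₁,y₂) = f(h⁻¹(y₀), h⁻¹(y₁), h⁻¹(y₂)). Then: (i) g is bounded, measurable, invariant under the diagonal ρ₂-action, and a cocycle; and (ii) there exists a bounded function β : Γ² → ℝ with β(γγ₀, γγ₁) = β(γ₀,γ₁) for all γ, γ₀, γ₁ ∈ Γ such that ψ_{ρ₁}(f)(γ₀,γ₁,γ₂) − ψ_{ρ₂}(g)(γ₀,γ₁,γ₂) = δβ(γ₀,γ₁,γ₂) for all γ₀,γ₁,γ₂ ∈ Γ. (This is the content of Lemma 2.1: the subspace CH²_b(Γ) of H²_b(Γ) is independent of the chosen hyperbolic metric, since the push-forward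 of an invariant cocycle under the equivariant boundary homeomorphism yields a cohomologous bounded cochain.) -/
open MeasureTheory

/-- The averaging map `ψ_ρ` sending a bounded measurable function on `X³` to a cochain on
`Γ³`: `ψ_ρ(f)(γ₀,γ₁,γ₂) = ∫_{X³} f(ρ(γ₀)x₀, ρ(γ₁)x₁, ρ(γ₂)x₂) dμ³`. -/
noncomputable def psi {Γ X : Type*} [MeasurableSpace X] (μ : Measure X)
    (ρ : Γ → X → X) (f : X → X → X → ℝ) (γ₀ γ₁ γ₂ : Γ) : ℝ :=
  ∫ p : X × X × X, f (ρ γ₀ p.1) (ρ γ₁ p.2.1) (ρ γ₂ p.2.2) ∂(μ.prod (μ.prod μ))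

/-- Lemma 2.1: two conjugate actions by homeomorphisms on a compact metrizable probability
space give, via the push-forward under the conjugating homeomorphism, an invariant bounded
measurable cocycle `g` whose averaged cochain `ψ_{ρ₂}(g)` differs from `ψ_{ρ₁}(f)` by the
coboundary of a bounded invariant `β : Γ² → ℝ`. -/
theorem pushforward_cocycle_cohomologous {Γ X : Type*} [Group Γ] [TopologicalSpace X]
    [CompactSpace X] [TopologicalSpace.MetrizableSpace X] [MeasurableSpace X] [BorelSpace X]
    (μ : Measure X) [IsProbabilityMeasure μ]
    (ρ₁ ρ₂ : Γ → X ≃ₜ X)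
    (hρ₁mul : ∀ γ γ' : Γ, ∀ x, ρ₁ (γ * γ') x = ρ₁ γ (ρ₁ γ' x)) (hρ₁one : ∀ x, ρ₁ 1 x = x)
    (hρ₂mul : ∀ γ γ' : Γ, ∀ x, ρ₂ (γ * γ') x = ρ₂ γ (ρ₂ γ' x)) (hρ₂one : ∀ x, ρ₂ 1 x = x)
    (h : X ≃ₜ X) (hconj : ∀ γ x, h (ρ₁ γ x) = ρ₂ γ (h x))
    (f : X → X → X → ℝ)
    (hbdd : ∃ C, ∀ x y z, |f x y z| ≤ C)
    (hmeas : Measurable fun p : X × X × X => f p.1 p.2.1 p.2.2)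
    (hinvf : ∀ γ x y z, f (ρ₁ γ x) (ρ₁ γ y) (ρ₁ γ z) = f x y z)
    (hcoc : ∀ x₀ x₁ x₂ x₃, f x₁ x₂ x₃ - f x₀ x₂ x₃ + f x₀ x₁ x₃ - f x₀ x₁ x₂ = 0)
    (g : X → X → X → ℝ)
    (hg : ∀ y₀ y₁ y₂, g y₀ y₁ y₂ = f (h.symm y₀) (h.symm y₁) (h.symm y₂)) :
    (∃ C, ∀ x y z, |g x y z| ≤ C) ∧
    (Measurable fun p : X × X × X => g p.1 p.2.1 p.2.2) ∧
    (∀ γ x y z, g (ρ₂ γ x) (ρ₂ γ y) (ρ₂ γ z) = g x y z) ∧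
    (∀ x₀ x₁ x₂ x₃, g x₁ x₂ x₃ - g x₀ x₂ x₃ + g x₀ x₁ x₃ - g x₀ x₁ x₂ = 0) ∧
    ∃ β : Γ → Γ → ℝ,
      (∃ C, ∀ γ₀ γ₁, |β γ₀ γ₁| ≤ C) ∧
      (∀ γ γ₀ γ₁ : Γ, β (γ * γ₀) (γ * γ₁) = β γ₀ γ₁) ∧
      (∀ γ₀ γ₁ γ₂ : Γ,
        psi μ (fun γ x => ρ₁ γ x) f γ₀ γ₁ γ₂ - psi μ (fun γ x => ρ₂ γ x) g γ₀ γ₁ γ₂ =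
          β γ₁ γ₂ - β γ₀ γ₂ + β γ₀ γ₁) := by
  obtain ⟨C, hC⟩ := hbdd
  have hsym : ∀ γ x, h.symm (ρ₂ γ x) = ρ₁ γ (h.symm x) := by
    intro γ x
    apply h.injective
    rw [hconj]; simp
  have hm : ∀ γ, Measurable (ρ₁ γ) := fun γ => (ρ₁ γ).continuous.measurable
  have hs : Measurable h.symm := h.symm.continuous.measurable
  refine ⟨⟨C, fun x y z => by rw [hg]; exact hC _ _ _⟩, ?_, ?_, ?_, ?_⟩
  · simp only [hg]
    exact hmeas.comp ((hs.comp measurable_fst).prodMk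
      ((hs.comp (measurable_fst.comp measurable_snd)).prodMk
        (hs.comp (measurable_snd.comp measurable_snd))))
  · intro γ x y z
    simp only [hg, hsym, hinvf]
  · intro x₀ x₁ x₂ x₃
    simp only [hg]
    exact hcoc _ _ _ _
  let F : Γ → Γ → X × X → ℝ := fun γ₀ γ₁ q =>
    f (ρ₁ γ₀ q.1) (ρ₁ γ₁ q.2) (ρ₁ γ₁ (h.symm q.2)) -
      f (ρ₁ γ₀ q.1) (ρ₁ γ₀ (h.symm q.1)) (ρ₁ γ₁ (h.symm q.2))
  have hFb : ∀ γ₀ γ₁ q, ‖F γ₀ γ₁ q‖ ≤ C + C := fun γ₀ γ₁ q =>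
    (norm_sub_le _ _).trans (add_le_add (hC _ _ _) (hC _ _ _))
  have hFm : ∀ γ₀ γ₁, Measurable (F γ₀ γ₁) := by
    intro γ₀ γ₁
    have a0 : Measurable fun q : X × X => ρ₁ γ₀ q.1 := (hm γ₀).comp measurable_fst
    have a1 : Measurable fun q : X × X => ρ₁ γ₁ q.2 := (hm γ₁).comp measurable_snd
    have b0 : Measurable fun q : X × X => ρ₁ γ₀ (h.symm q.1) :=
      (hm γ₀).comp (hs.comp measurable_fst)
    have b1 : Measurable fun q : X × X => ρ₁ γ₁ (h.symm q.2) :=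
      (hm γ₁).comp (hs.comp measurable_snd)
    exact (hmeas.comp (a0.prodMk (a1.prodMk b1))).sub (hmeas.comp (a0.prodMk (b0.prodMk b1)))
  refine ⟨fun γ₀ γ₁ => ∫ q, F γ₀ γ₁ q ∂(μ.prod μ), ⟨C + C, ?_⟩, ?_, ?_⟩
  · intro γ₀ γ₁
    have := norm_integral_le_of_norm_le_const (μ := μ.prod μ)
      (Filter.Eventually.of_forall (hFb γ₀ γ₁))
    simpa using this
  · intro γ γ₀ γ₁
    simp only [F, hρ₁mul, hinvf]
  intro γ₀ γ₁ γ₂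
  have key : ∀ (π : X × X × X → X × X), MeasurePreserving π (μ.prod (μ.prod μ)) (μ.prod μ) →
      ∀ γ γ', Integrable (fun p => F γ γ' (π p)) (μ.prod (μ.prod μ)) ∧
        ∫ q, F γ γ' q ∂(μ.prod μ) = ∫ p, F γ γ' (π p) ∂(μ.prod (μ.prod μ)) := by
    intro π hπ γ γ'
    refine ⟨Integrable.of_bound ((hFm γ γ').comp hπ.measurable).aestronglyMeasurable (C + C)
      (Filter.Eventually.of_forall fun p => hFb _ _ _), ?_⟩
    have e := integral_map (μ := μ.prod (μ.prod μ)) hπ.measurable.aemeasurable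
      (hFm γ γ').aestronglyMeasurable
    rwa [hπ.map_eq] at e
  obtain ⟨i12, e12⟩ := key Prod.snd measurePreserving_snd γ₁ γ₂
  obtain ⟨i02, e02⟩ := key (Prod.map id Prod.snd)
    ((MeasurePreserving.id μ).prod measurePreserving_snd) γ₀ γ₂
  obtain ⟨i01, e01⟩ := key (Prod.map id Prod.fst)
    ((MeasurePreserving.id μ).prod measurePreserving_fst) γ₀ γ₁
  have p0 : Measurable fun p : X × X × X => p.1 := measurable_fst
  have p1 : Measurable fun p : X × X × X => p.2.1 := measurable_fst.comp measurable_snd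
  have p2 : Measurable fun p : X × X × X => p.2.2 := measurable_snd.comp measurable_snd
  have ia : Integrable (fun p : X × X × X => f (ρ₁ γ₀ p.1) (ρ₁ γ₁ p.2.1) (ρ₁ γ₂ p.2.2))
      (μ.prod (μ.prod μ)) :=
    Integrable.of_bound (hmeas.comp (((hm _).comp p0).prodMk
      (((hm _).comp p1).prodMk ((hm _).comp p2)))).aestronglyMeasurable C
      (Filter.Eventually.of_forall fun p => hC _ _ _)
  have ib : Integrable (fun p : X × X × X => f (ρ₁ γ₀ (h.symm p.1)) (ρ₁ γ₁ (h.symm p.2.1))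
      (ρ₁ γ₂ (h.symm p.2.2))) (μ.prod (μ.prod μ)) :=
    Integrable.of_bound (hmeas.comp (((hm _).comp (hs.comp p0)).prodMk
      (((hm _).comp (hs.comp p1)).prodMk ((hm _).comp (hs.comp p2))))).aestronglyMeasurable C
      (Filter.Eventually.of_forall fun p => hC _ _ _)
  simp only [psi, hg, hsym]
  rw [e12, e02, e01, ← integral_sub ia ib, ← integral_sub i12 i02]
  refine Eq.trans ?_ (integral_add (i12.sub i02) i01)
  congr 1
  funext p
  simp only [F, Prod.map, id, Pi.sub_apply]
  have E1 := hcoc (ρ₁ γ₀ p.1) (ρ₁ γ₀ (h.symm p.1)) (ρ₁ γ₁ (h.symm p.2.1)) (ρ₁ γ₂ (h.symm p.2.2))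
  have E2 := hcoc (ρ₁ γ₀ p.1) (ρ₁ γ₁ p.2.1) (ρ₁ γ₁ (h.symm p.2.1)) (ρ₁ γ₂ (h.symm p.2.2))
  have E3 := hcoc (ρ₁ γ₀ p.1) (ρ₁ γ₁ p.2.1) (ρ₁ γ₂ p.2.2) (ρ₁ γ₂ (h.symm p.2.2))
  linarith
end

section
/- Let Γ be a group acting on a compact metrizable space X (with Borel probability measure μ) by homeomorphisms, let ρ : Γ → Γ be a group automorphism, and let T : X → X be a homeomorphism satisfying T(γ·x) = ρ(γ)·T(x) for all γ ∈ Γ and x ∈ X. Let f : X³ → ℝ be bounded, measurable, invariant under the diagonal Γ-action, and a cocycle. Define g : X³ → ℝ by g(y₀,y₁,y₂) = f(T⁻¹(y₀), T⁻¹(y₁), T⁻¹(y₂)). Then: (i) g is bounded, measurable, invariant under the diagonal Γ-action, and a cocycle; and (ii) there exists a bounded function β : Γ² → ℝ with β(γγ₀, γγ₁) = β(γ₀,γ₁) for all γ, γ₀, γ₁ ∈ Γ such that ψ(f)(ρ⁻¹(γ₀), ρ⁻¹(γ₁), ρ⁻¹(γ₂)) − ψ(g)(γ₀,γ₁,γ₂)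 = δβ(γ₀,γ₁,γ₂) for all γ₀,γ₁,γ₂ ∈ Γ. (This is the content of Lemma 3.1, describing the action of a mapping class on CH²_b(Γ): the class obtained by twisting ψ(f) by the automorphism ρ induced by a diffeomorphism is represented by the push-forward of f under the induced boundary homeomorphism T.) -/
open MeasureTheory

theorem mp_integral_aux {A B : Type*} [MeasurableSpace A] [MeasurableSpace B] {μ : Measure A}
    {ν : Measure B} {φ : A → B} (h : MeasurePreserving φ μ ν) {F : B → ℝ} (hF : Measurable F) :
    ∫ b, F b ∂ν = ∫ a, F (φ a) ∂μ := by
  rw [← h.map_eq]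
  exact integral_map h.measurable.aemeasurable hF.aestronglyMeasurable

/-- Lemma 3.1: given an action `σ` of `Γ` by homeomorphisms on a compact metrizable
probability space, a group automorphism `ρ` of `Γ` and a homeomorphism `T` with
`T(γ·x) = ρ(γ)·T(x)`, the push-forward `g = f ∘ (T⁻¹)³` of an invariant bounded measurable
cocycle `f` is again an invariant bounded measurable cocycle, and the twisted cochain
`ψ(f)(ρ⁻¹γ₀, ρ⁻¹γ₁, ρ⁻¹γ₂)` differs from `ψ(g)(γ₀,γ₁,γ₂)` by the coboundary of a bounded
invariant `β : Γ² → ℝ`. -/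
theorem mcg_action_on_boundary_cocycles {Γ X : Type*} [Group Γ] [TopologicalSpace X]
    [CompactSpace X] [TopologicalSpace.MetrizableSpace X] [MeasurableSpace X] [BorelSpace X]
    (μ : Measure X) [IsProbabilityMeasure μ]
    (σ : Γ → X ≃ₜ X)
    (hσmul : ∀ γ γ' : Γ, ∀ x, σ (γ * γ') x = σ γ (σ γ' x)) (hσone : ∀ x, σ 1 x = x)
    (ρ : Γ ≃* Γ)
    (T : X ≃ₜ X) (hT : ∀ γ x, T (σ γ x) = σ (ρ γ) (T x))
    (f : X → X → X → ℝ)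
    (hbdd : ∃ C, ∀ x y z, |f x y z| ≤ C)
    (hmeas : Measurable fun p : X × X × X => f p.1 p.2.1 p.2.2)
    (hinvf : ∀ γ x y z, f (σ γ x) (σ γ y) (σ γ z) = f x y z)
    (hcoc : ∀ x₀ x₁ x₂ x₃, f x₁ x₂ x₃ - f x₀ x₂ x₃ + f x₀ x₁ x₃ - f x₀ x₁ x₂ = 0)
    (g : X → X → X → ℝ)
    (hg : ∀ y₀ y₁ y₂, g y₀ y₁ y₂ = f (T.symm y₀) (T.symm y₁) (T.symm y₂)) :
    (∃ C, ∀ x y z, |g x y z| ≤ C) ∧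
    (Measurable fun p : X × X × X => g p.1 p.2.1 p.2.2) ∧
    (∀ γ x y z, g (σ γ x) (σ γ y) (σ γ z) = g x y z) ∧
    (∀ x₀ x₁ x₂ x₃, g x₁ x₂ x₃ - g x₀ x₂ x₃ + g x₀ x₁ x₃ - g x₀ x₁ x₂ = 0) ∧
    ∃ β : Γ → Γ → ℝ,
      (∃ C, ∀ γ₀ γ₁, |β γ₀ γ₁| ≤ C) ∧
      (∀ γ γ₀ γ₁ : Γ, β (γ * γ₀) (γ * γ₁) = β γ₀ γ₁) ∧
      (∀ γ₀ γ₁ γ₂ : Γ,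
        psi μ (fun γ x => σ γ x) f (ρ.symm γ₀) (ρ.symm γ₁) (ρ.symm γ₂) -
          psi μ (fun γ x => σ γ x) g γ₀ γ₁ γ₂ =
          β γ₁ γ₂ - β γ₀ γ₂ + β γ₀ γ₁) := by
  obtain ⟨C, hC⟩ := hbdd
  have hTs : ∀ γ y, T.symm (σ γ y) = σ (ρ.symm γ) (T.symm y) := by
    intro γ y
    apply T.injective
    simp [hT]
  have hTm : Measurable T.symm := T.symm.continuous.measurable
  have hsm : ∀ γ, Measurable (σ γ) := fun γ => (σ γ).continuous.measurable
  have hfm : ∀ {Ω : Type _} [MeasurableSpace Ω] (a b c : Ω → X), Measurable a → Measurable b →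
      Measurable c → Measurable fun w => f (a w) (b w) (c w) := by
    intro Ω _ a b c ha hb hc
    exact hmeas.comp (ha.prodMk (hb.prodMk hc))
  refine ⟨⟨C, fun x y z => by rw [hg]; exact hC _ _ _⟩, ?_, ?_, ?_, ?_⟩
  · simp only [hg]
    apply hfm <;> fun_prop
  · intro γ x y z
    simp only [hg, hTs, hinvf]
  · intro x₀ x₁ x₂ x₃
    simp only [hg]
    exact hcoc _ _ _ _
  let m : Measure (X × X) := μ.prod μ
  let H : Γ → Γ → (X × X) × (X × X) → ℝ := fun γ₀ γ₁ p =>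
    f (σ (ρ.symm γ₀) p.1.1) (σ (ρ.symm γ₀) (T.symm p.1.2)) (σ (ρ.symm γ₁) (T.symm p.2.2)) -
    f (σ (ρ.symm γ₀) p.1.1) (σ (ρ.symm γ₁) p.2.1) (σ (ρ.symm γ₁) (T.symm p.2.2))
  have hHm : ∀ a b, Measurable (H a b) := by
    intro a b
    have h1 := hsm (ρ.symm a)
    have h2 := hsm (ρ.symm b)
    apply Measurable.sub <;> apply hfm <;> fun_prop
  have hHb : ∀ a b p, ‖H a b p‖ ≤ C + C := by
    intro a b p
    rw [Real.norm_eq_abs]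
    exact (abs_sub _ _).trans (add_le_add (hC _ _ _) (hC _ _ _))
  refine ⟨fun a b => -∫ p, H a b p ∂(m.prod m), ⟨C + C, ?_⟩, ?_, ?_⟩
  · intro a b
    rw [abs_neg, ← Real.norm_eq_abs]
    simpa using norm_integral_le_of_norm_le_const (μ := m.prod m)
      (Filter.Eventually.of_forall (hHb a b))
  · intro γ a b
    simp only [H, map_mul, hσmul, hinvf]
  intro a b c
  let P := m.prod (m.prod m)
  have h1 := hsm (ρ.symm a)
  have h2 := hsm (ρ.symm b)
  have h3 := hsm (ρ.symm c)
  have pf : MeasurePreserving (Prod.fst : X × X → X) m μ := measurePreserving_fst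
  have ps : MeasurePreserving (Prod.snd : X × X → X) m μ := measurePreserving_snd
  have p12 : MeasurePreserving (fun w : (X × X) × (X × X) × (X × X) => (w.2.1, w.2.2)) P
    (m.prod m) := measurePreserving_snd
  have p01 : MeasurePreserving (fun w : (X × X) × (X × X) × (X × X) => (w.1, w.2.1)) P
    (m.prod m) := (MeasurePreserving.id m).prod measurePreserving_fst
  have p02 : MeasurePreserving (fun w : (X × X) × (X × X) × (X × X) => (w.1, w.2.2)) P
    (m.prod m) := (MeasurePreserving.id m).prod measurePreserving_snd
  have px : MeasurePreserving (fun w : (X × X) × (X × X) × (X × X) => (w.1.1, w.2.1.1, w.2.2.1)) P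
    (μ.prod (μ.prod μ)) := pf.prod (pf.prod pf)
  have py : MeasurePreserving (fun w : (X × X) × (X × X) × (X × X) => (w.1.2, w.2.1.2, w.2.2.2)) P
    (μ.prod (μ.prod μ)) := ps.prod (ps.prod ps)
  have mf : Measurable fun p : X × X × X =>
      f (σ (ρ.symm a) p.1) (σ (ρ.symm b) p.2.1) (σ (ρ.symm c) p.2.2) := by
    apply hfm <;> fun_prop
  have mg : Measurable fun p : X × X × X =>
      f (σ (ρ.symm a) (T.symm p.1)) (σ (ρ.symm b) (T.symm p.2.1))
        (σ (ρ.symm c) (T.symm p.2.2)) := by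
    apply hfm <;> fun_prop
  simp only [psi, hg, hTs]
  rw [mp_integral_aux px mf, mp_integral_aux py mg]
  beta_reduce
  rw [mp_integral_aux p12 (hHm b c), mp_integral_aux p02 (hHm a c), mp_integral_aux p01 (hHm a b)]
  have i12 : Integrable (fun w => H b c (w.2.1, w.2.2)) P :=
    Integrable.of_bound ((hHm b c).comp p12.measurable).aestronglyMeasurable (C + C)
      (Filter.Eventually.of_forall fun _ => hHb _ _ _)
  have i02 : Integrable (fun w => H a c (w.1, w.2.2)) P :=
    Integrable.of_bound ((hHm a c).comp p02.measurable).aestronglyMeasurable (C + C)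
      (Filter.Eventually.of_forall fun _ => hHb _ _ _)
  have i01 : Integrable (fun w => H a b (w.1, w.2.1)) P :=
    Integrable.of_bound ((hHm a b).comp p01.measurable).aestronglyMeasurable (C + C)
      (Filter.Eventually.of_forall fun _ => hHb _ _ _)
  have ix := Integrable.of_bound (μ := P) (mf.comp px.measurable).aestronglyMeasurable C
      (Filter.Eventually.of_forall fun _ => hC _ _ _)
  have iy := Integrable.of_bound (μ := P) (mg.comp py.measurable).aestronglyMeasurable C
      (Filter.Eventually.of_forall fun _ => hC _ _ _)
  simp only [Function.comp_def] at ix iy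
  have e : ∀ r s t : ℝ, -r - -s + -t = s - r - t := fun r s t => by ring
  rw [e, ← integral_sub ix iy, ← integral_sub i02 i12]
  refine Eq.trans ?_ (integral_sub (i02.sub i12) i01)
  congr 1
  funext w
  simp only [H, Pi.sub_apply]
  generalize σ (ρ.symm a) w.1.1 = x0
  generalize σ (ρ.symm b) w.2.1.1 = x1
  generalize σ (ρ.symm c) w.2.2.1 = x2
  generalize σ (ρ.symm a) (T.symm w.1.2) = y0
  generalize σ (ρ.symm b) (T.symm w.2.1.2) = y1
  generalize σ (ρ.symm c) (T.symm w.2.2.2) = y2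
  linarith [hcoc x0 x1 x2 y2, hcoc x0 x1 y1 y2, hcoc x0 y0 y1 y2]
end
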